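/- For every Λ > 0 there exists a constant C > 0, depending only on φ and Λ, with the following property. Let r > 0, let x, y ∈ ℝ⁴ with |x−y| ≤ r, and let s₁ ∈ (0, 10r] and s₂ ∈ [r/10, 10r]. Suppose u is harmonic on an open set containing the closed ball B̄_y(20r), and suppose that H_φ(z,t) > 0 and N_φ(z,t) ≤ Λ for z ∈ {x, y} and all t ∈ (0, 20r]. Then H_φ(x,s₁) ≤ C·H_φ(y,s₂). -/

import Mathlib

open Metric MeasureTheory
open scoped RealInnerProductSpace

noncomputable section

abbrev E4 := EuclideanSpace ℝ (Fin 4)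

variable {E : Type*} [NormedAddCommGroup E] [InnerProductSpace ℝ E] [FiniteDimensional ℝ E]

/-- `u` is smooth and harmonic (the Laplacian, i.e. the sum of the pure second
derivatives in the coordinate directions, vanishes) on `Ω`. -/
def IsHarmonicOn (u : E4 → E) (Ω : Set E4) : Prop :=
  ContDiffOn ℝ (⊤ : ℕ∞) u Ω ∧
  ∀ x ∈ Ω, ∑ i : Fin 4,
    iteratedFDeriv ℝ 2 u x ![EuclideanSpace.single i (1:ℝ), EuclideanSpace.single i 1] = 0

/-- `|∇u(y)|²`, the squared Frobenius norm of the derivative of `u` at `y`. -/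
def gradSq (u : E4 → E) (y : E4) : ℝ :=
  ∑ i : Fin 4, ‖fderiv ℝ u y (EuclideanSpace.single i (1:ℝ))‖ ^ 2

/-- `D_φ(x,r) = ∫ |∇u(y)|² φ(|y−x|/r) dy`. -/
def Dphi (φ : ℝ → ℝ) (u : E4 → E) (x : E4) (r : ℝ) : ℝ :=
  ∫ y, gradSq u y * φ (‖y - x‖ / r)

/-- `H_φ(x,r) = −∫ |u(y)|² |y−x|⁻¹ φ'(|y−x|/r) dy`. -/
def Hphi (φ : ℝ → ℝ) (u : E4 → E) (x : E4) (r : ℝ) : ℝ :=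
  -∫ y, ‖u y‖ ^ 2 * ‖y - x‖⁻¹ * deriv φ (‖y - x‖ / r)

/-- `E_φ(x,r) = −∫ |∂_{ν_x}u(y)|² |y−x| φ'(|y−x|/r) dy`, where `ν_x(y) = (y−x)/|y−x|`. -/
def Ephi (φ : ℝ → ℝ) (u : E4 → E) (x : E4) (r : ℝ) : ℝ :=
  -∫ y, ‖fderiv ℝ u y (‖y - x‖⁻¹ • (y - x))‖ ^ 2 * ‖y - x‖ * deriv φ (‖y - x‖ / r)

/-- The smoothed frequency `N_φ(x,r) = r D_φ(x,r) / H_φ(x,r)`. -/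
def Nphi (φ : ℝ → ℝ) (u : E4 → E) (x : E4) (r : ℝ) : ℝ :=
  r * Dphi φ u x r / Hphi φ u x r

/-!
Rescaled to the unit ball, the height `H(x, s)` is `s ^ (n - 1)` times a weighted mean `G(s)` of
`|u|²` near the sphere of radius `s`. The height kernel `κ` and the energy kernel `η` are related by
`∇η(w) = -κ(w) w`, so integration by parts gives `G'(s) = s ∫ Δ|u|² = 2 s ∫ |∇u|²`, the means being
weighted by `η`.

The frequency bound therefore says `s G'(s) ≤ 2 Λ G(s)`, and `G` at most grows like `s ^ (2 Λ)`.
Since `|u|²` is subharmonic, `G` is also nondecreasing, and the mean of `|u|²` over a ball is at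
most `1 / n` times its mean over the spherical shell. To pass from `x` to `y`, note that the ball of
radius `10 r` about `x` lies in the ball of radius `12 r = 3/4 · 16 r` about `y`, where the cutoff
is `1`, so `H(x, s₁) ≤ H(x, 10 r) ≲ H(y, 16 r) ≲ H(y, s₂)`.
-/

/-! ### Calculus -/

theorem le_rpow_mul_of_mul_deriv_le {g g' : ℝ → ℝ} {p a b : ℝ} (ha : 0 < a) (hab : a ≤ b)
    (hg : ∀ s ∈ Set.Icc a b, HasDerivAt g (g' s) s)
    (hle : ∀ s ∈ Set.Icc a b, s * g' s ≤ p * g s) :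
    g b ≤ (b / a) ^ p * g a := by
  have hb : 0 < b := ha.trans_le hab
  have hderiv : ∀ s ∈ Set.Icc a b, HasDerivAt (fun s => s ^ (-p) * g s)
      (-p * s ^ (-p - 1) * g s + s ^ (-p) * g' s) s := fun s hs =>
    (Real.hasDerivAt_rpow_const (Or.inl (ha.trans_le hs.1).ne')).mul (hg s hs)
  have hanti : AntitoneOn (fun s => s ^ (-p) * g s) (Set.Icc a b) := by
    refine antitoneOn_of_deriv_nonpos (convex_Icc a b)
      (fun s hs => (hderiv s hs).continuousAt.continuousWithinAt)
      (fun s hs => (hderiv s (interior_subset hs)).differentiableAt.differentiableWithinAt)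
      fun s hs => ?_
    have hs := interior_subset hs
    have hs0 : 0 < s := ha.trans_le hs.1
    have hfactor : -p * s ^ (-p - 1) * g s + s ^ (-p) * g' s =
        s ^ (-p) / s * (s * g' s - p * g s) := by
      rw [Real.rpow_sub_one hs0.ne']
      field_simp
      ring
    rw [(hderiv s hs).deriv, hfactor]
    exact mul_nonpos_of_nonneg_of_nonpos (by positivity) (sub_nonpos.2 (hle s hs))
  calc g b = b ^ p * (b ^ (-p) * g b) := by rw [Real.rpow_neg hb.le]; field_simp
    _ ≤ b ^ p * (a ^ (-p) * g a) :=
        mul_le_mul_of_nonneg_left (hanti ⟨le_rfl, hab⟩ ⟨hab, le_rfl⟩ hab) (by positivity)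
    _ = (b / a) ^ p * g a := by
        rw [Real.rpow_neg ha.le, Real.div_rpow hb.le ha.le]
        ring

theorem exists_contDiff_eqOn_ball {V G : Type*} [NormedAddCommGroup V] [NormedSpace ℝ V]
    [HasContDiffBump V] [NormedAddCommGroup G] [NormedSpace ℝ G] {n : ℕ∞}
    {f : V → G} {z : V} {r R : ℝ} (hr : 0 < r) (hrR : r < R)
    (hf : ContDiffOn ℝ n f (ball z R)) :
    ∃ g : V → G, ContDiff ℝ n g ∧ Set.EqOn g f (ball z r) := by
  obtain ⟨ρ, hrρ, hρR⟩ := exists_between hrR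
  let χ : ContDiffBump z := ⟨r, ρ, hr, hrρ⟩
  have hsupp : tsupport (fun p => χ p • f p) ⊆ ball z R :=
    (tsupport_smul_subset_left _ _).trans (χ.tsupport_eq.trans_subset (closedBall_subset_ball hρR))
  refine ⟨fun p => χ p • f p, contDiff_iff_contDiffAt.2 fun p => ?_, fun p hp => ?_⟩
  · by_cases hp : p ∈ tsupport fun p => χ p • f p
    · exact χ.contDiffAt.smul (hf.contDiffAt (isOpen_ball.mem_nhds (hsupp hp)))
    · exact contDiffAt_const.congr_of_eventuallyEq (notMem_tsupport_iff_eventuallyEq.1 hp)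
  · simp only [χ.one_of_mem_closedBall (ball_subset_closedBall hp), one_smul]

section Divergence

variable {V : Type*} [NormedAddCommGroup V] [NormedSpace ℝ V]

theorem fderiv_comp_add_smul {G : Type*} [NormedAddCommGroup G] [NormedSpace ℝ G] {f : V → G}
    {z w : V} {s : ℝ} : fderiv ℝ (fun w => f (z + s • w)) w = s • fderiv ℝ f (z + s • w) := by
  rw [fderiv_comp_smul (f := fun w => f (z + w)), fderiv_comp_add_left]

variable [FiniteDimensional ℝ V]

theorem trace_fderiv_smul_self {g : V → ℝ} {w : V} (hg : DifferentiableAt ℝ g w) :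
    LinearMap.trace ℝ V (fderiv ℝ (fun w => g w • w) w) =
      Module.finrank ℝ V * g w + fderiv ℝ g w w := by
  have hX : (fderiv ℝ (fun w => g w • w) w : V →ₗ[ℝ] V) =
      g w • LinearMap.id + (fderiv ℝ g w : V →ₗ[ℝ] ℝ).smulRight w :=
    LinearMap.ext fun v => DFunLike.congr_fun (hg.hasFDerivAt.smul (hasFDerivAt_id w)).fderiv v
  rw [hX, map_add, map_smul, LinearMap.trace_id, LinearMap.trace_smulRight, smul_eq_mul, mul_comm]
  rfl

variable [MeasurableSpace V] [BorelSpace V] {μ : Measure V} [μ.IsAddHaarMeasure]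

theorem integral_fderiv_apply_eq_neg_integral_mul_trace {g : V → ℝ} {X : V → V}
    (hg : ContDiff ℝ 1 g) (hgc : HasCompactSupport g) (hX : ContDiff ℝ 1 X) :
    ∫ w, fderiv ℝ g w (X w) ∂μ = -∫ w, g w * LinearMap.trace ℝ V (fderiv ℝ X w) ∂μ := by
  let b := Module.finBasis ℝ V
  let c := fun i => (b.coord i).toContinuousLinearMap
  have hcX : ∀ i, ContDiff ℝ 1 fun w => c i (X w) := fun i => (c i).contDiff.comp hX
  have hexpand : ∀ w, fderiv ℝ g w (X w) = ∑ i, c i (X w) * fderiv ℝ g w (b i) := fun w => by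
    conv_lhs => rw [← b.sum_repr (X w)]
    simp only [map_sum, map_smul, smul_eq_mul]
    rfl
  have htrace : ∀ w, LinearMap.trace ℝ V (fderiv ℝ X w) =
      ∑ i, fderiv ℝ (fun w => c i (X w)) w (b i) := fun w => by
    have hd : ∀ i, fderiv ℝ (fun w => c i (X w)) w = c i ∘L fderiv ℝ X w := fun i =>
      ((c i).hasFDerivAt.comp w (hX.differentiable (by simp) w).hasFDerivAt).fderiv
    simp only [hd, ContinuousLinearMap.comp_apply, LinearMap.trace_eq_matrix_trace ℝ b,
      Matrix.trace, Matrix.diag_apply, LinearMap.toMatrix_apply]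
    rfl
  have hint : ∀ i, Integrable (fun w => c i (X w) * fderiv ℝ g w (b i)) μ := fun i =>
    ((hcX i).continuous.mul ((hg.continuous_fderiv (by simp)).clm_apply
      continuous_const)).integrable_of_hasCompactSupport (hgc.fderiv_apply (𝕜 := ℝ) _).mul_left
  have hint' : ∀ i, Integrable (fun w => fderiv ℝ (fun w => c i (X w)) w (b i) * g w) μ := fun i =>
    ((((hcX i).continuous_fderiv (by simp)).clm_apply continuous_const).mul
      hg.continuous).integrable_of_hasCompactSupport hgc.mul_left
  have hparts : ∀ i, ∫ w, c i (X w) * fderiv ℝ g w (b i) ∂μ =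
      -∫ w, fderiv ℝ (fun w => c i (X w)) w (b i) * g w ∂μ := fun i =>
    integral_mul_fderiv_eq_neg_fderiv_mul_of_integrable (hint' i) (hint i)
      (((hcX i).continuous.mul hg.continuous).integrable_of_hasCompactSupport hgc.mul_left)
      (fun w _ => (hcX i).differentiable (by simp) w) fun w _ => hg.differentiable (by simp) w
  simp only [hexpand, htrace, mul_comm (g _), Finset.sum_mul]
  rw [integral_finsetSum _ fun i _ => hint i, integral_finsetSum _ fun i _ => hint' i,
    ← Finset.sum_neg_distrib]
  exact Finset.sum_congr rfl fun i _ => hparts i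

theorem integral_eq_pow_mul_integral_comp_add_smul {G : Type*} [NormedAddCommGroup G]
    [NormedSpace ℝ G] (f : V → G) (z : V) {s : ℝ} (hs : 0 < s) :
    ∫ p, f p ∂μ = s ^ Module.finrank ℝ V • ∫ w, f (z + s • w) ∂μ := by
  rw [Measure.integral_comp_smul_of_nonneg μ (fun w => f (z + w)) s (hR := hs.le),
    integral_add_left_eq_self f z, smul_inv_smul₀ (by positivity)]

end Divergence

section Gradient

open InnerProductSpace Gradient Laplacian

variable {V : Type*} [NormedAddCommGroup V] [InnerProductSpace ℝ V] [FiniteDimensional ℝ V]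
  {F : Type*} [NormedAddCommGroup F] [InnerProductSpace ℝ F]

theorem contDiffAt_gradient {n : WithTop ℕ∞} {f : V → ℝ} {p : V} (hf : ContDiffAt ℝ (n + 1) f p) :
    ContDiffAt ℝ n (∇ f) p :=
  (toDual ℝ V).symm.toContinuousLinearEquiv.contDiff.contDiffAt.comp p (hf.fderiv_right le_rfl)

theorem eqOn_laplacian {f g : V → F} {U : Set V} (hU : IsOpen U) (hfg : Set.EqOn f g U) :
    Set.EqOn (Δ f) (Δ g) U := fun _ hp =>
  (laplacian_congr_nhds (hfg.eventuallyEq_of_mem (hU.mem_nhds hp))).eq_of_nhds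

theorem trace_fderiv_gradient {f : V → ℝ} {p : V} (hf : ContDiffAt ℝ 2 f p) :
    LinearMap.trace ℝ V (fderiv ℝ (∇ f) p) = (Δ f) p := by
  rw [LinearMap.trace_eq_sum_inner _ (stdOrthonormalBasis ℝ V),
    laplacian_eq_iteratedFDeriv_stdOrthonormalBasis]
  refine Finset.sum_congr rfl fun i _ => ?_
  set v := stdOrthonormalBasis ℝ V i
  have hgrad : HasFDerivAt (fun q => ⟪v, ∇ f q⟫) (innerSL ℝ v ∘L fderiv ℝ (∇ f) p) p :=
    (innerSL ℝ v).hasFDerivAt.comp p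
      ((contDiffAt_gradient (n := 1) hf).differentiableAt (by simp)).hasFDerivAt
  have hdir : HasFDerivAt (fun q => fderiv ℝ f q v) ((fderiv ℝ (fderiv ℝ f) p).flip v) p :=
    ((hf.fderiv_right (m := 1) le_rfl).differentiableAt (by simp)).hasFDerivAt.clm_apply
      (hasFDerivAt_const v p) |>.congr_fderiv (by simp)
  have heq : (fun q => ⟪v, ∇ f q⟫) = fun q => fderiv ℝ f q v :=
    funext fun q => by rw [real_inner_comm, inner_gradient_left]
  simp only [iteratedFDeriv_two_apply, Matrix.cons_val_zero, Matrix.cons_val_one]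
  exact DFunLike.congr_fun (hgrad.unique (hdir.congr_of_eventuallyEq (.of_eq heq))) v

/-- The squared Frobenius norm `|∇u|²` of the derivative of `u`, computed in the standard
orthonormal basis; see `gradNormSq_eq_sum` for the independence of the basis. -/
def gradNormSq (u : V → F) (p : V) : ℝ :=
  ∑ i, ‖fderiv ℝ u p (stdOrthonormalBasis ℝ V i)‖ ^ 2

theorem gradNormSq_nonneg (u : V → F) (p : V) : 0 ≤ gradNormSq u p :=
  Finset.sum_nonneg fun _ _ => by positivity

theorem gradNormSq_eq_sum {ι : Type*} [Fintype ι] (b : OrthonormalBasis ι ℝ V) (u : V → F)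
    (p : V) : gradNormSq u p = ∑ i, ‖fderiv ℝ u p (b i)‖ ^ 2 := by
  let B : V →ₗ[ℝ] V →ₗ[ℝ] ℝ := (innerₗ F).compl₁₂ (fderiv ℝ u p) (fderiv ℝ u p)
  have h := (canonicalCovariantTensor_eq_sum V (stdOrthonormalBasis ℝ V)).symm.trans
    (canonicalCovariantTensor_eq_sum V b)
  simpa [gradNormSq, B] using congrArg (TensorProduct.lift B) h

theorem laplacian_norm_sq {u : V → F} {p : V} (hu : ContDiffAt ℝ 2 u p) :
    (Δ fun q => ‖u q‖ ^ 2) p = 2 * gradNormSq u p + 2 * ⟪u p, (Δ u) p⟫ := by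
  have hd : ∀ᶠ q in nhds p, DifferentiableAt ℝ u q :=
    (hu.eventually (by simp)).mono fun q hq => hq.differentiableAt (by simp)
  have hd2 : HasFDerivAt (fderiv ℝ u) (fderiv ℝ (fderiv ℝ u) p) p :=
    ((hu.fderiv_right (m := 1) le_rfl).differentiableAt (by simp)).hasFDerivAt
  have hfst : fderiv ℝ (fun q => ‖u q‖ ^ 2) =ᶠ[nhds p]
      fun q => 2 • (innerSL ℝ (u q)) ∘L fderiv ℝ u q :=
    hd.mono fun q hq => hq.hasFDerivAt.norm_sq.fderiv
  simp only [laplacian_eq_iteratedFDeriv_stdOrthonormalBasis, iteratedFDeriv_two_apply,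
    Matrix.cons_val_zero, Matrix.cons_val_one]
  have hsnd := ((((innerSL ℝ).hasFDerivAt.comp p hd.self_of_nhds.hasFDerivAt).clm_comp
    hd2).const_smul (2 : ℝ)).congr_of_eventuallyEq (hfst.trans (.of_eq (by ext; simp; rfl)))
  simp only [hsnd.fderiv, gradNormSq, inner_sum, Finset.mul_sum, ← Finset.sum_add_distrib]
  refine Finset.sum_congr rfl fun i _ => ?_
  set v := stdOrthonormalBasis ℝ V i
  change 2 * (⟪u p, fderiv ℝ (fderiv ℝ u) p v v⟫ + ⟪fderiv ℝ u p v, fderiv ℝ u p v⟫) = _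
  rw [real_inner_self_eq_norm_sq, mul_add, add_comm]

theorem laplacian_norm_sq_eqOn {u : V → F} {U : Set V} (hu : HarmonicOnNhd u U) :
    Set.EqOn (Δ fun p => ‖u p‖ ^ 2) (fun p => 2 * gradNormSq u p) U := fun p hp => by
  rw [laplacian_norm_sq (hu p hp).1, (hu p hp).2.eq_of_nhds, Pi.zero_apply, inner_zero_right,
    mul_zero, add_zero]

theorem laplacian_norm_sq_nonneg {u : V → F} {U : Set V} (hu : HarmonicOnNhd u U) {p : V}
    (hp : p ∈ U) : 0 ≤ (Δ fun p => ‖u p‖ ^ 2) p :=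
  (mul_nonneg zero_le_two (gradNormSq_nonneg u p)).trans_eq (laplacian_norm_sq_eqOn hu hp).symm

end Gradient

/-! ### Weighted means over balls -/

section KernelMeans

open InnerProductSpace Gradient Laplacian

variable {V : Type*} [NormedAddCommGroup V]

/-- A continuous weight on `V` vanishing outside the open unit ball. -/
structure IsUnitBallKernel (k : V → ℝ) : Prop where
  continuous : Continuous k
  eq_zero : ∀ w, 1 ≤ ‖w‖ → k w = 0

theorem IsUnitBallKernel.norm_sq_mul {k : V → ℝ} (hk : IsUnitBallKernel k) :
    IsUnitBallKernel fun w => ‖w‖ ^ 2 * k w :=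
  ⟨(continuous_norm.pow 2).mul hk.continuous, fun w hw => by rw [hk.eq_zero w hw, mul_zero]⟩

variable [InnerProductSpace ℝ V]

/-- `η` is the potential of the kernel `κ`: it vanishes outside the unit ball and satisfies
`∇η(w) = -κ(w) w`. For radial kernels this says `η(w) = ∫_{‖w‖}^∞ κ(t) t dt`; it is the form in
which kernels enter Green's identity on balls. -/
structure IsKernelPotential (η κ : V → ℝ) : Prop where
  kernel : IsUnitBallKernel κ
  hasFDerivAt : ∀ w, HasFDerivAt η (-κ w • innerSL ℝ w) w
  eq_zero : ∀ w, 1 ≤ ‖w‖ → η w = 0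

namespace IsKernelPotential

variable {η κ : V → ℝ}

theorem fderiv_apply (h : IsKernelPotential η κ) (w v : V) :
    fderiv ℝ η w v = -(κ w * ⟪w, v⟫) := by
  rw [(h.hasFDerivAt w).fderiv, neg_smul]
  rfl

theorem potential (h : IsKernelPotential η κ) : IsUnitBallKernel η :=
  ⟨continuous_iff_continuousAt.2 fun w => (h.hasFDerivAt w).continuousAt, h.eq_zero⟩

theorem contDiff (h : IsKernelPotential η κ) : ContDiff ℝ 1 η :=
  contDiff_one_iff_hasFDerivAt.2 ⟨_, h.kernel.continuous.neg.smul (innerSL ℝ).continuous,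
    h.hasFDerivAt⟩

end IsKernelPotential

variable {k f g : V → ℝ} {z : V} {s S : ℝ}

theorem add_smul_mem_ball {w : V} (hs : 0 < s) (hw : ‖w‖ < 1) : z + s • w ∈ ball z s := by
  simpa [norm_smul, abs_of_pos hs] using mul_lt_of_lt_one_right hs hw

theorem comp_add_smul_mul_kernel_congr (hk : IsUnitBallKernel k) (hs : 0 < s)
    (hfg : Set.EqOn f g (ball z s)) (w : V) : f (z + s • w) * k w = g (z + s • w) * k w := by
  rcases lt_or_ge ‖w‖ 1 with hw | hw
  · rw [hfg (add_smul_mem_ball hs hw)]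
  · simp only [hk.eq_zero w hw, mul_zero]

section Mean

variable [MeasurableSpace V] (μ : Measure V)

/-- The unnormalised average `∫ f(z + s w) k(w) dw` of `f` over the ball of centre `z` and radius
`s`, weighted by the kernel `k` rescaled to that ball. -/
def weightedMean (k f : V → ℝ) (z : V) (s : ℝ) : ℝ :=
  ∫ w, f (z + s • w) * k w ∂μ

variable {μ}

theorem weightedMean_congr (hk : IsUnitBallKernel k) (hs : 0 < s)
    (hfg : Set.EqOn f g (ball z s)) : weightedMean μ k f z s = weightedMean μ k g z s :=
  integral_congr_ae (.of_forall (comp_add_smul_mul_kernel_congr hk hs hfg))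

theorem weightedMean_nonneg (hk : IsUnitBallKernel k) (hk0 : 0 ≤ k) (hs : 0 < s)
    (hf : ∀ p ∈ ball z s, 0 ≤ f p) : 0 ≤ weightedMean μ k f z s := by
  refine integral_nonneg fun w => ?_
  rcases lt_or_ge ‖w‖ 1 with hw | hw
  · exact mul_nonneg (hf _ (add_smul_mem_ball hs hw)) (hk0 w)
  · simp only [hk.eq_zero w hw, mul_zero, Pi.zero_apply, le_refl]

end Mean

variable [FiniteDimensional ℝ V]

theorem IsUnitBallKernel.hasCompactSupport (hk : IsUnitBallKernel k) :
    HasCompactSupport k :=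
  .intro (isCompact_closedBall 0 1) fun w hw =>
    hk.eq_zero w (by simpa using (not_le.1 (mt mem_closedBall.2 hw)).le)

variable [MeasurableSpace V] [BorelSpace V] {μ : Measure V} [μ.IsAddHaarMeasure]

theorem integrable_comp_add_smul_mul_kernel (hk : IsUnitBallKernel k)
    (hf : ContinuousOn f (ball z S)) (hs : 0 < s) (hsS : s < S) :
    Integrable (fun w => f (z + s • w) * k w) μ := by
  obtain ⟨g, hg, hgf⟩ := exists_contDiff_eqOn_ball (n := 0) hs hsS (contDiffOn_zero.2 hf)
  refine Integrable.congr ?_ (.of_forall (comp_add_smul_mul_kernel_congr hk hs hgf))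
  exact ((hg.continuous.comp (by fun_prop)).mul
    hk.continuous).integrable_of_hasCompactSupport hk.hasCompactSupport.mul_left

theorem weightedMean_mono_kernel {l : V → ℝ} (hk : IsUnitBallKernel k) (hl : IsUnitBallKernel l)
    (hkl : ∀ w, ‖w‖ < 1 → k w ≤ l w) (hf : ContinuousOn f (ball z S)) (hs : 0 < s) (hsS : s < S)
    (hf0 : ∀ p ∈ ball z s, 0 ≤ f p) : weightedMean μ k f z s ≤ weightedMean μ l f z s := by
  refine integral_mono (integrable_comp_add_smul_mul_kernel hk hf hs hsS)
    (integrable_comp_add_smul_mul_kernel hl hf hs hsS) fun w => ?_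
  rcases lt_or_ge ‖w‖ 1 with hw | hw
  · exact mul_le_mul_of_nonneg_left (hkl w hw) (hf0 _ (add_smul_mem_ball hs hw))
  · simp only [hk.eq_zero w hw, hl.eq_zero w hw, le_refl]

theorem hasDerivAt_weightedMean (hf : ContDiff ℝ 1 f) (hk : IsUnitBallKernel k) (z : V) (s : ℝ) :
    HasDerivAt (weightedMean μ k f z) (∫ w, fderiv ℝ f (z + s • w) w * k w ∂μ) s := by
  have hcont : Continuous fun q : ℝ × V => fderiv ℝ f (z + q.1 • q.2) q.2 :=
    ((hf.continuous_fderiv (by simp)).comp (by fun_prop)).clm_apply continuous_snd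
  obtain ⟨K, hK⟩ := ((isCompact_closedBall s 1).prod
    (isCompact_closedBall (0 : V) 1)).exists_bound_of_continuousOn hcont.continuousOn
  have hbound : ∀ w, ∀ t ∈ ball s 1, ‖fderiv ℝ f (z + t • w) w * k w‖ ≤ K * ‖k w‖ := by
    intro w t ht
    rcases lt_or_ge ‖w‖ 1 with hw | hw
    · rw [norm_mul]
      exact mul_le_mul_of_nonneg_right
        (hK (t, w) ⟨ball_subset_closedBall ht, by simpa using hw.le⟩) (norm_nonneg _)
    · simp only [hk.eq_zero w hw, mul_zero, norm_zero, le_refl]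
  have hderiv : ∀ w, ∀ t : ℝ,
      HasDerivAt (fun t => f (z + t • w) * k w) (fderiv ℝ f (z + t • w) w * k w) t := fun w t => by
    have hline : HasDerivAt (fun t : ℝ => z + t • w) w t := by
      simpa using ((hasDerivAt_id t).smul_const w).const_add z
    exact ((hf.differentiable (by simp) _).hasFDerivAt.comp_hasDerivAt t hline).mul_const (k w)
  have hint : ∀ t : ℝ, Integrable (fun w => f (z + t • w) * k w) μ := fun t =>
    ((hf.continuous.comp (by fun_prop)).mul
      hk.continuous).integrable_of_hasCompactSupport hk.hasCompactSupport.mul_left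
  exact (hasDerivAt_integral_of_dominated_loc_of_deriv_le (ball_mem_nhds s one_pos)
    (.of_forall fun t => (hint t).aestronglyMeasurable) (hint s)
    ((hcont.comp (by fun_prop : Continuous fun w : V => (s, w))).mul
      hk.continuous).aestronglyMeasurable
    (.of_forall hbound)
    ((hk.continuous.integrable_of_hasCompactSupport hk.hasCompactSupport).norm.const_mul K)
    (.of_forall fun w t _ => hderiv w t)).2

theorem integral_mul_comp_inv_smul_sub (k f : V → ℝ) (z : V) (hs : 0 < s) :
    ∫ p, f p * k (s⁻¹ • (p - z)) ∂μ = s ^ Module.finrank ℝ V * weightedMean μ k f z s := by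
  rw [integral_eq_pow_mul_integral_comp_add_smul _ z hs, smul_eq_mul, weightedMean]
  simp only [add_sub_cancel_left, inv_smul_smul₀ hs.ne']

namespace IsKernelPotential

variable {η κ ζ : V → ℝ}

theorem integral_fderiv_mul_eq (h : IsKernelPotential η κ) (hf : ContDiff ℝ 2 f) (z : V) (s : ℝ) :
    ∫ w, fderiv ℝ f (z + s • w) w * κ w ∂μ = s * weightedMean μ η (Δ f) z s := by
  have hgrad : ContDiff ℝ 1 (∇ f) :=
    contDiff_iff_contDiffAt.2 fun p => contDiffAt_gradient hf.contDiffAt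
  have htrace : ∀ w, LinearMap.trace ℝ V (fderiv ℝ (fun w => ∇ f (z + s • w)) w) =
      s * (Δ f) (z + s • w) := fun w => by
    rw [fderiv_comp_add_smul, ContinuousLinearMap.toLinearMap_smul, map_smul,
      trace_fderiv_gradient hf.contDiffAt, smul_eq_mul]
  have hdiv := integral_fderiv_apply_eq_neg_integral_mul_trace (μ := μ) h.contDiff
    h.potential.hasCompactSupport (hgrad.comp (by fun_prop : ContDiff ℝ 1 fun w => z + s • w))
  have hη : ∀ w, fderiv ℝ η w (∇ f (z + s • w)) = -(fderiv ℝ f (z + s • w) w * κ w) := fun w => by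
    rw [h.fderiv_apply, ← inner_gradient_left, real_inner_comm, mul_comm]
  simp only [Function.comp_def, hη, htrace, integral_neg, neg_inj] at hdiv
  rw [hdiv, weightedMean, ← integral_const_mul]
  exact integral_congr_ae (.of_forall fun w => by ring)

theorem hasDerivAt_weightedMean (h : IsKernelPotential η κ) (hf : ContDiffOn ℝ 2 f (ball z S))
    (hs : 0 < s) (hsS : s < S) :
    HasDerivAt (weightedMean μ κ f z) (s * weightedMean μ η (Δ f) z s) s := by
  obtain ⟨ρ, hsρ, hρS⟩ := exists_between hsS
  obtain ⟨g, hg, hgf⟩ := exists_contDiff_eqOn_ball (n := 2) (hs.trans hsρ) hρS hf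
  have hmean : weightedMean μ κ f z =ᶠ[nhds s] weightedMean μ κ g z :=
    Filter.eventually_of_mem (Ioo_mem_nhds hs hsρ) fun t ht =>
      weightedMean_congr h.kernel ht.1 fun p hp => (hgf (ball_subset_ball ht.2.le hp)).symm
  rw [← weightedMean_congr h.potential hs
    ((eqOn_laplacian isOpen_ball hgf).mono (ball_subset_ball hsρ.le)),
    ← h.integral_fderiv_mul_eq hg]
  exact (_root_.hasDerivAt_weightedMean (hg.of_le (by norm_num)) h.kernel z s).congr_of_eventuallyEq
    hmean

theorem finrank_mul_weightedMean_add_of_contDiff (h : IsKernelPotential η κ) (hf : ContDiff ℝ 1 f)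
    (z : V) (s : ℝ) :
    Module.finrank ℝ V * weightedMean μ η f z s + s * ∫ w, fderiv ℝ f (z + s • w) w * η w ∂μ =
      weightedMean μ (fun w => ‖w‖ ^ 2 * κ w) f z s := by
  have haff : ContDiff ℝ 1 fun w : V => z + s • w := by fun_prop
  have hfa : ContDiff ℝ 1 fun w => f (z + s • w) := hf.comp haff
  have htrace : ∀ w, LinearMap.trace ℝ V (fderiv ℝ (fun w => f (z + s • w) • w) w) =
      Module.finrank ℝ V * f (z + s • w) + s * fderiv ℝ f (z + s • w) w := fun w => by
    rw [trace_fderiv_smul_self (hfa.differentiable (by simp) w), fderiv_comp_add_smul]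
    rfl
  have hη : ∀ w, fderiv ℝ η w (f (z + s • w) • w) = -(f (z + s • w) * (‖w‖ ^ 2 * κ w)) := by
    intro w
    rw [h.fderiv_apply, inner_smul_right, real_inner_self_eq_norm_sq]
    ring
  have hdiv := integral_fderiv_apply_eq_neg_integral_mul_trace (μ := μ) h.contDiff
    h.potential.hasCompactSupport (hfa.smul contDiff_id)
  simp only [Pi.smul_def', id, hη, htrace, integral_neg, neg_inj] at hdiv
  have hint : Integrable (fun w => fderiv ℝ f (z + s • w) w * η w) μ :=
    ((((hf.continuous_fderiv (by simp)).comp haff.continuous).clm_apply continuous_id).mul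
      h.contDiff.continuous).integrable_of_hasCompactSupport h.potential.hasCompactSupport.mul_left
  have hint' : Integrable (fun w => f (z + s • w) * η w) μ :=
    (hfa.continuous.mul
      h.contDiff.continuous).integrable_of_hasCompactSupport h.potential.hasCompactSupport.mul_left
  rw [weightedMean, weightedMean, hdiv, ← integral_const_mul, ← integral_const_mul,
    ← integral_add (hint'.const_mul _) (hint.const_mul _)]
  exact integral_congr_ae (.of_forall fun w => by ring)

theorem finrank_mul_weightedMean_add (hη : IsKernelPotential η κ) (hζ : IsKernelPotential ζ η)
    (hf : ContDiffOn ℝ 2 f (ball z S)) (hs : 0 < s) (hsS : s < S) :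
    Module.finrank ℝ V * weightedMean μ η f z s + s ^ 2 * weightedMean μ ζ (Δ f) z s =
      weightedMean μ (fun w => ‖w‖ ^ 2 * κ w) f z s := by
  obtain ⟨g, hg, hgf⟩ := exists_contDiff_eqOn_ball (n := 2) hs hsS hf
  have hglobal := hη.finrank_mul_weightedMean_add_of_contDiff (μ := μ) (hg.of_le (by norm_num)) z s
  rw [hζ.integral_fderiv_mul_eq hg, ← mul_assoc, ← sq] at hglobal
  rwa [← weightedMean_congr hη.potential hs hgf, ← weightedMean_congr hη.kernel.norm_sq_mul hs hgf,
    ← weightedMean_congr hζ.potential hs (eqOn_laplacian isOpen_ball hgf)]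

theorem monotoneOn_weightedMean (h : IsKernelPotential η κ) (hη0 : 0 ≤ η)
    (hf : ContDiffOn ℝ 2 f (ball z S)) (hΔ : ∀ p ∈ ball z S, 0 ≤ (Δ f) p) :
    MonotoneOn (weightedMean μ κ f z) (Set.Ioo 0 S) := by
  have hderiv : ∀ s ∈ Set.Ioo 0 S, HasDerivAt (weightedMean μ κ f z) _ s := fun s hs =>
    h.hasDerivAt_weightedMean hf hs.1 hs.2
  refine monotoneOn_of_deriv_nonneg (convex_Ioo 0 S)
    (fun s hs => (hderiv s hs).continuousAt.continuousWithinAt)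
    (fun s hs => (hderiv s (interior_subset hs)).differentiableAt.differentiableWithinAt)
    fun s hs => ?_
  have hs := interior_subset hs
  rw [(hderiv s hs).deriv]
  exact mul_nonneg hs.1.le (weightedMean_nonneg h.potential hη0 hs.1 fun p hp =>
    hΔ p (ball_subset_ball hs.2.le hp))

theorem finrank_mul_weightedMean_le (hη : IsKernelPotential η κ) (hζ : IsKernelPotential ζ η)
    (hκ0 : 0 ≤ κ) (hζ0 : 0 ≤ ζ) (hf : ContDiffOn ℝ 2 f (ball z S)) (hs : 0 < s) (hsS : s < S)
    (hf0 : ∀ p ∈ ball z s, 0 ≤ f p) (hΔ : ∀ p ∈ ball z s, 0 ≤ (Δ f) p) :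
    Module.finrank ℝ V * weightedMean μ η f z s ≤ weightedMean μ κ f z s := by
  calc Module.finrank ℝ V * weightedMean μ η f z s
      ≤ Module.finrank ℝ V * weightedMean μ η f z s + s ^ 2 * weightedMean μ ζ (Δ f) z s :=
        le_add_of_nonneg_right (mul_nonneg (sq_nonneg s)
          (weightedMean_nonneg hζ.potential hζ0 hs hΔ))
    _ = weightedMean μ (fun w => ‖w‖ ^ 2 * κ w) f z s :=
        finrank_mul_weightedMean_add hη hζ hf hs hsS
    _ ≤ weightedMean μ κ f z s := weightedMean_mono_kernel hη.kernel.norm_sq_mul hη.kernel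
        (fun w hw => mul_le_of_le_one_left (hκ0 w) (pow_le_one₀ (norm_nonneg w) hw.le))
        hf.continuousOn hs hsS hf0

end IsKernelPotential

end KernelMeans

/-! ### The cutoff and its kernels -/

section Cutoff

/-- The hypotheses on the cutoff `φ` that define the smoothed height and energy. -/
structure IsCutoffProfile (φ : ℝ → ℝ) : Prop where
  contDiff : ContDiff ℝ 1 φ
  antitone : Antitone φ
  eq_one : ∀ t ≤ 3 / 4, φ t = 1
  eq_zero : ∀ t, 1 ≤ t → φ t = 0

variable {V : Type*} [NormedAddCommGroup V]

/-- The kernel `-‖w‖⁻¹ φ'(‖w‖)` of the smoothed height, which smooths out the unit sphere. -/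
def shellKernel (φ : ℝ → ℝ) (w : V) : ℝ :=
  -(‖w‖⁻¹ * deriv φ ‖w‖)

/-- The kernel `φ(‖w‖)` of the smoothed energy, which smooths out the unit ball. It is the potential
of `shellKernel φ`. -/
def ballKernel (φ : ℝ → ℝ) (w : V) : ℝ :=
  φ ‖w‖

/-- The potential `∫ φ(t) t dt`, `‖w‖ ≤ t ≤ 1`, of `ballKernel φ`, written in the variable `t²`
so that it is manifestly differentiable at the origin. -/
def ballPotential (φ : ℝ → ℝ) (w : V) : ℝ :=
  2⁻¹ * ∫ q in ‖w‖ ^ 2..1, φ √q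

theorem isKernelPotential_comp_norm_sq [InnerProductSpace ℝ V] {h k : ℝ → ℝ} (hk : Continuous k)
    (hderiv : ∀ q, HasDerivAt h (-(2⁻¹ * k q)) q) (hh1 : ∀ q, 1 ≤ q → h q = 0)
    (hk1 : ∀ q, 1 ≤ q → k q = 0) :
    IsKernelPotential (fun w : V => h (‖w‖ ^ 2)) fun w => k (‖w‖ ^ 2) where
  kernel := ⟨hk.comp (continuous_norm.pow 2), fun w hw => hk1 _ (one_le_pow₀ hw)⟩
  hasFDerivAt w := by
    have hcomp := (hderiv (‖w‖ ^ 2)).comp_hasFDerivAt w (hasStrictFDerivAt_norm_sq w).hasFDerivAt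
    refine hcomp.congr_fderiv ?_
    module
  eq_zero w hw := hh1 _ (one_le_pow₀ hw)

namespace IsCutoffProfile

variable {φ : ℝ → ℝ}

theorem nonneg (hφ : IsCutoffProfile φ) (t : ℝ) : 0 ≤ φ t :=
  (hφ.eq_zero _ (le_max_right t 1)).ge.trans (hφ.antitone (le_max_left t 1))

theorem le_one (hφ : IsCutoffProfile φ) (t : ℝ) : φ t ≤ 1 :=
  (hφ.antitone (min_le_left t (3 / 4))).trans (hφ.eq_one _ (min_le_right t (3 / 4))).le

theorem deriv_eq_zero_of_le (hφ : IsCutoffProfile φ) {t : ℝ} (ht : t ≤ 3 / 4) : deriv φ t = 0 :=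
  IsLocalMax.deriv_eq_zero (.of_forall fun s => (hφ.le_one s).trans (hφ.eq_one t ht).ge)

theorem deriv_eq_zero_of_ge (hφ : IsCutoffProfile φ) {t : ℝ} (ht : 1 ≤ t) : deriv φ t = 0 :=
  IsLocalMin.deriv_eq_zero (.of_forall fun s => (hφ.eq_zero t ht).le.trans (hφ.nonneg s))

theorem continuous_neg_inv_sqrt_mul_deriv (hφ : IsCutoffProfile φ) :
    Continuous fun q => -((√q)⁻¹ * deriv φ √q) := by
  refine continuous_iff_continuousAt.2 fun q => ?_
  rcases lt_or_ge q (1 / 2) with hq | hq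
  · refine continuousAt_const.congr (f := fun _ => (0 : ℝ)) ?_
    filter_upwards [Iio_mem_nhds hq] with p hp
    rw [hφ.deriv_eq_zero_of_le, mul_zero, neg_zero]
    exact Real.sqrt_le_iff.2 ⟨by norm_num, hp.le.trans (by norm_num)⟩
  · exact ((Real.continuous_sqrt.continuousAt.inv₀ (Real.sqrt_pos.2 (by linarith)).ne').mul
      ((hφ.contDiff.continuous_deriv le_rfl).comp Real.continuous_sqrt).continuousAt).neg

theorem hasDerivAt_comp_sqrt (hφ : IsCutoffProfile φ) (q : ℝ) :
    HasDerivAt (fun q => φ √q) (-(2⁻¹ * -((√q)⁻¹ * deriv φ √q))) q := by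
  rcases lt_or_ge q (1 / 2) with hq | hq
  · have hle : ∀ p < (1 / 2 : ℝ), √p ≤ 3 / 4 := fun p hp =>
      Real.sqrt_le_iff.2 ⟨by norm_num, hp.le.trans (by norm_num)⟩
    rw [hφ.deriv_eq_zero_of_le (hle q hq), mul_zero, neg_zero, mul_zero, neg_zero]
    refine (hasDerivAt_const q (1 : ℝ)).congr_of_eventuallyEq ?_
    filter_upwards [Iio_mem_nhds hq] with p hp using hφ.eq_one _ (hle p hp)
  · refine ((hφ.contDiff.differentiable one_ne_zero _).hasDerivAt.comp q
      (Real.hasDerivAt_sqrt (by linarith))).congr_deriv ?_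
    field_simp

theorem shellKernel_nonneg (hφ : IsCutoffProfile φ) : 0 ≤ shellKernel (V := V) φ := fun w =>
  neg_nonneg.2 (mul_nonpos_of_nonneg_of_nonpos (inv_nonneg.2 (norm_nonneg w))
    hφ.antitone.deriv_nonpos)

theorem ballKernel_nonneg (hφ : IsCutoffProfile φ) : 0 ≤ ballKernel (V := V) φ := fun w =>
  hφ.nonneg ‖w‖

theorem integral_comp_sqrt_eq_zero (hφ : IsCutoffProfile φ) {q : ℝ} (hq : 1 ≤ q) :
    ∫ t in q..1, φ √t = 0 := by
  refine intervalIntegral.integral_zero_ae (.of_forall fun t ht => hφ.eq_zero _ ?_)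
  rw [Set.uIoc_of_ge hq] at ht
  exact Real.one_le_sqrt.2 ht.1.le

theorem ballPotential_nonneg (hφ : IsCutoffProfile φ) : 0 ≤ ballPotential (V := V) φ := fun w => by
  refine mul_nonneg (by norm_num) ?_
  rcases le_total (‖w‖ ^ 2) 1 with hw | hw
  · exact intervalIntegral.integral_nonneg hw fun t _ => hφ.nonneg _
  · exact (hφ.integral_comp_sqrt_eq_zero hw).ge

variable [InnerProductSpace ℝ V]

theorem isKernelPotential_ballKernel (hφ : IsCutoffProfile φ) :
    IsKernelPotential (V := V) (ballKernel φ) (shellKernel φ) := by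
  have h := isKernelPotential_comp_norm_sq (V := V) hφ.continuous_neg_inv_sqrt_mul_deriv
    hφ.hasDerivAt_comp_sqrt
    (fun q hq => hφ.eq_zero _ (Real.one_le_sqrt.2 hq))
    fun q hq => by rw [hφ.deriv_eq_zero_of_ge (Real.one_le_sqrt.2 hq), mul_zero, neg_zero]
  simp only [Real.sqrt_sq (norm_nonneg _)] at h
  exact h

theorem isKernelPotential_ballPotential (hφ : IsCutoffProfile φ) :
    IsKernelPotential (V := V) (ballPotential φ) (ballKernel φ) := by
  have hcont : Continuous fun q => φ √q := hφ.contDiff.continuous.comp Real.continuous_sqrt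
  have h := isKernelPotential_comp_norm_sq (V := V) hcont
    (fun q => ((intervalIntegral.integral_hasDerivAt_left (hcont.intervalIntegrable q 1)
      (hcont.stronglyMeasurableAtFilter _ _) hcont.continuousAt).const_mul (2⁻¹ : ℝ)).congr_deriv
      (by ring))
    (fun q hq => by rw [hφ.integral_comp_sqrt_eq_zero hq, mul_zero])
    fun q hq => hφ.eq_zero _ (Real.one_le_sqrt.2 hq)
  simp only [Real.sqrt_sq (norm_nonneg _)] at h
  exact h

theorem exists_shellKernel_le (hφ : IsCutoffProfile φ) [FiniteDimensional ℝ V] :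
    ∃ B > 0, ∀ w : V, shellKernel φ w ≤ B := by
  have hκ := hφ.isKernelPotential_ballKernel (V := V) |>.kernel
  obtain ⟨B, hB⟩ := hκ.hasCompactSupport.exists_bound_of_continuous hκ.continuous
  exact ⟨max B 1, by positivity, fun w =>
    (le_abs_self _).trans ((hB w).trans (le_max_left B 1))⟩

end IsCutoffProfile

end Cutoff

/-! ### Smoothed height and frequency -/

section SmoothedHeight

open InnerProductSpace Laplacian

variable {V : Type*} [NormedAddCommGroup V] [MeasurableSpace V] {F : Type*} [NormedAddCommGroup F]

section Definitions

variable (μ : Measure V)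

/-- The smoothed height `H_φ(x,r) = -∫ |u(p)|² |p - x|⁻¹ φ'(|p - x| / r) dp`. -/
def smoothedHeight (φ : ℝ → ℝ) (u : V → F) (x : V) (r : ℝ) : ℝ :=
  -∫ p, ‖u p‖ ^ 2 * ‖p - x‖⁻¹ * deriv φ (‖p - x‖ / r) ∂μ

variable [InnerProductSpace ℝ V] [FiniteDimensional ℝ V] [InnerProductSpace ℝ F]

/-- The smoothed Dirichlet energy `D_φ(x,r) = ∫ |∇u(p)|² φ(|p - x| / r) dp`. -/
def smoothedEnergy (φ : ℝ → ℝ) (u : V → F) (x : V) (r : ℝ) : ℝ :=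
  ∫ p, gradNormSq u p * φ (‖p - x‖ / r) ∂μ

/-- The smoothed frequency `N_φ(x,r) = r D_φ(x,r) / H_φ(x,r)`, which is `0` where
`H_φ(x,r) = 0`. -/
def smoothedFrequency (φ : ℝ → ℝ) (u : V → F) (x : V) (r : ℝ) : ℝ :=
  r * smoothedEnergy μ φ u x r / smoothedHeight μ φ u x r

end Definitions

variable [InnerProductSpace ℝ V] {μ : Measure V} {φ : ℝ → ℝ} {u : V → F} {x y : V} {r s t S : ℝ}

theorem mul_smoothedHeight_eq_integral (hr : 0 < r) :
    r * smoothedHeight μ φ u x r = ∫ p, ‖u p‖ ^ 2 * shellKernel φ (r⁻¹ • (p - x)) ∂μ := by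
  rw [smoothedHeight, ← integral_neg, ← integral_const_mul]
  refine integral_congr_ae (.of_forall fun p => ?_)
  have hnorm : ‖r⁻¹ • (p - x)‖ = ‖p - x‖ / r := by
    rw [norm_smul, norm_inv, Real.norm_of_nonneg hr.le, inv_mul_eq_div]
  simp only [shellKernel, hnorm, inv_div]
  ring

variable [FiniteDimensional ℝ V]

theorem smoothedEnergy_eq_integral [InnerProductSpace ℝ F] (hr : 0 < r) :
    smoothedEnergy μ φ u x r = ∫ p, gradNormSq u p * ballKernel φ (r⁻¹ • (p - x)) ∂μ := by
  simp only [smoothedEnergy, ballKernel, norm_smul, norm_inv, Real.norm_of_nonneg hr.le,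
    inv_mul_eq_div]

variable [BorelSpace V] [μ.IsAddHaarMeasure]

theorem mul_smoothedHeight_le_weightedMean_ballKernel (hφ : IsCutoffProfile φ) {B : ℝ}
    (hB : ∀ w : V, shellKernel φ w ≤ B) (hu : ContinuousOn u (ball y S)) (hs : 0 < s)
    (hst : dist x y + s ≤ 3 / 4 * t) (htS : t < S) :
    s * smoothedHeight μ φ u x s ≤
      B * (t ^ Module.finrank ℝ V *
        weightedMean μ (ballKernel φ) (fun p => ‖u p‖ ^ 2) y t) := by
  have ht : 0 < t := by linarith [dist_nonneg (x := x) (y := y)]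
  have hpointwise : ∀ p, shellKernel φ (s⁻¹ • (p - x)) ≤ B * ballKernel φ (t⁻¹ • (p - y)) := by
    intro p
    rcases lt_or_ge ‖s⁻¹ • (p - x)‖ 1 with hp | hp
    · suffices ‖t⁻¹ • (p - y)‖ ≤ 3 / 4 by
        rw [ballKernel, hφ.eq_one _ this, mul_one]
        exact hB _
      rw [norm_smul, norm_inv, Real.norm_of_nonneg hs.le, inv_mul_lt_one₀ hs, ← dist_eq_norm] at hp
      rw [norm_smul, norm_inv, Real.norm_of_nonneg ht.le, inv_mul_le_iff₀ ht, ← dist_eq_norm]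
      linarith [dist_triangle p x y]
    · rw [hφ.isKernelPotential_ballKernel.kernel.eq_zero _ hp]
      exact mul_nonneg ((hφ.shellKernel_nonneg 0).trans (hB 0)) (hφ.ballKernel_nonneg _)
  have hint := integrable_comp_add_smul_mul_kernel (μ := μ)
    hφ.isKernelPotential_ballKernel.potential (f := fun p => ‖u p‖ ^ 2) (hu.norm.pow 2) ht htS
  rw [mul_smoothedHeight_eq_integral hs, integral_eq_pow_mul_integral_comp_add_smul _ y ht,
    smul_eq_mul, mul_left_comm, weightedMean, ← integral_const_mul B]
  refine mul_le_mul_of_nonneg_left (integral_mono_of_nonneg (.of_forall fun w => ?_)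
    (hint.const_mul B) (.of_forall fun w => ?_)) (pow_nonneg ht.le _)
  · exact mul_nonneg (sq_nonneg _) (hφ.shellKernel_nonneg _)
  · have hw := mul_le_mul_of_nonneg_left (hpointwise (y + t • w)) (sq_nonneg ‖u (y + t • w)‖)
    rwa [add_sub_cancel_left, inv_smul_smul₀ ht.ne', mul_left_comm] at hw

variable [Nontrivial V]

theorem smoothedHeight_eq (hr : 0 < r) :
    smoothedHeight μ φ u x r = r ^ (Module.finrank ℝ V - 1) *
      weightedMean μ (shellKernel φ) (fun p => ‖u p‖ ^ 2) x r := by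
  refine mul_left_cancel₀ hr.ne' ?_
  rw [mul_smoothedHeight_eq_integral hr,
    integral_mul_comp_inv_smul_sub _ (fun p => ‖u p‖ ^ 2) _ hr, ← mul_assoc,
    mul_pow_sub_one Module.finrank_pos.ne']

variable [InnerProductSpace ℝ F]

theorem sq_mul_weightedMean_gradNormSq_le {Λ : ℝ} (hr : 0 < r)
    (hH : 0 < smoothedHeight μ φ u x r) (hN : smoothedFrequency μ φ u x r ≤ Λ) :
    r ^ 2 * weightedMean μ (ballKernel φ) (gradNormSq u) x r ≤
      Λ * weightedMean μ (shellKernel φ) (fun p => ‖u p‖ ^ 2) x r := by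
  have hEH := (div_le_iff₀ hH).1 hN
  rw [smoothedEnergy_eq_integral hr, integral_mul_comp_inv_smul_sub _ _ _ hr, smoothedHeight_eq hr,
    ← mul_pow_sub_one Module.finrank_pos.ne' r] at hEH
  refine le_of_mul_le_mul_left ?_ (pow_pos hr (Module.finrank ℝ V - 1))
  linear_combination hEH

variable (hφ : IsCutoffProfile φ)

include hφ

theorem smoothedHeight_mono (hu : HarmonicOnNhd u (ball x S)) (hs : 0 < s) (hst : s ≤ t)
    (htS : t < S) : smoothedHeight μ φ u x s ≤ smoothedHeight μ φ u x t := by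
  have hmono := hφ.isKernelPotential_ballKernel.monotoneOn_weightedMean (μ := μ)
    hφ.ballKernel_nonneg (hu.contDiffOn.norm_sq ℝ) fun p hp => laplacian_norm_sq_nonneg hu hp
  rw [smoothedHeight_eq hs, smoothedHeight_eq (hs.trans_le hst)]
  exact mul_le_mul (pow_le_pow_left₀ hs.le hst _)
    (hmono ⟨hs, hst.trans_lt htS⟩ ⟨hs.trans_le hst, htS⟩ hst)
    (weightedMean_nonneg hφ.isKernelPotential_ballKernel.kernel hφ.shellKernel_nonneg hs
      fun p _ => sq_nonneg _)
    (pow_nonneg (hs.trans_le hst).le _)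

theorem smoothedHeight_le_of_smoothedFrequency_le {Λ : ℝ} (hu : HarmonicOnNhd u (ball x S))
    (hs : 0 < s) (hst : s ≤ t) (htS : t < S)
    (hN : ∀ ρ ∈ Set.Icc s t, 0 < smoothedHeight μ φ u x ρ ∧ smoothedFrequency μ φ u x ρ ≤ Λ) :
    smoothedHeight μ φ u x t ≤
      (t / s) ^ (Module.finrank ℝ V - 1) * (t / s) ^ (2 * Λ) * smoothedHeight μ φ u x s := by
  have ht : 0 < t := hs.trans_le hst
  have hgrowth := le_rpow_mul_of_mul_deriv_le (p := 2 * Λ) hs hst (fun ρ hρ =>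
    hφ.isKernelPotential_ballKernel.hasDerivAt_weightedMean (μ := μ) (hu.contDiffOn.norm_sq ℝ)
      (hs.trans_le hρ.1) (hρ.2.trans_lt htS)) fun ρ hρ => ?_
  · rw [smoothedHeight_eq hs, smoothedHeight_eq ht]
    calc _ ≤ t ^ (Module.finrank ℝ V - 1) * _ := mul_le_mul_of_nonneg_left hgrowth (by positivity)
      _ = _ := by rw [div_pow]; field_simp
  · have hρ0 : 0 < ρ := hs.trans_le hρ.1
    have hlap : weightedMean μ (ballKernel φ) (Δ fun p => ‖u p‖ ^ 2) x ρ =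
        2 * weightedMean μ (ballKernel φ) (gradNormSq u) x ρ := by
      rw [weightedMean_congr hφ.isKernelPotential_ballKernel.potential hρ0
        ((laplacian_norm_sq_eqOn hu).mono (ball_subset_ball (hρ.2.trans htS.le))), weightedMean,
        weightedMean, ← integral_const_mul]
      simp only [mul_assoc]
    have hfreq := sq_mul_weightedMean_gradNormSq_le hρ0 (hN ρ hρ).1 (hN ρ hρ).2
    rw [hlap]
    linear_combination 2 * hfreq

theorem smoothedHeight_le_smoothedHeight_of_dist_add_le {B : ℝ} (hB : ∀ w : V, shellKernel φ w ≤ B)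
    (hu : HarmonicOnNhd u (ball y S)) (hs : 0 < s) (hst : dist x y + s ≤ 3 / 4 * t) (htS : t < S) :
    smoothedHeight μ φ u x s ≤ B * t / (Module.finrank ℝ V * s) * smoothedHeight μ φ u y t := by
  have ht : 0 < t := by linarith [dist_nonneg (x := x) (y := y)]
  have hn : (0 : ℝ) < Module.finrank ℝ V := mod_cast Module.finrank_pos
  have hball := hφ.isKernelPotential_ballKernel.finrank_mul_weightedMean_le (μ := μ)
    hφ.isKernelPotential_ballPotential hφ.shellKernel_nonneg hφ.ballPotential_nonneg
    (hu.contDiffOn.norm_sq ℝ) ht htS (fun p _ => sq_nonneg _) fun p hp =>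
      laplacian_norm_sq_nonneg hu (ball_subset_ball htS.le hp)
  rw [div_mul_eq_mul_div, le_div_iff₀ (by positivity)]
  calc smoothedHeight μ φ u x s * (Module.finrank ℝ V * s)
      = Module.finrank ℝ V * (s * smoothedHeight μ φ u x s) := by ring
    _ ≤ Module.finrank ℝ V * (B * (t ^ Module.finrank ℝ V *
          weightedMean μ (ballKernel φ) (fun p => ‖u p‖ ^ 2) y t)) :=
        mul_le_mul_of_nonneg_left (mul_smoothedHeight_le_weightedMean_ballKernel hφ hB
          hu.contDiffOn.continuousOn hs hst htS) hn.le
    _ = B * t ^ Module.finrank ℝ V * (Module.finrank ℝ V *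
          weightedMean μ (ballKernel φ) (fun p => ‖u p‖ ^ 2) y t) := by ring
    _ ≤ B * t ^ Module.finrank ℝ V *
          weightedMean μ (shellKernel φ) (fun p => ‖u p‖ ^ 2) y t :=
        mul_le_mul_of_nonneg_left hball
          (mul_nonneg ((hφ.shellKernel_nonneg 0).trans (hB 0)) (pow_nonneg ht.le _))
    _ = B * t * smoothedHeight μ φ u y t := by
        rw [smoothedHeight_eq ht, ← mul_pow_sub_one Module.finrank_pos.ne' t]
        ring

end SmoothedHeight

section Main

open InnerProductSpace

theorem stmt_15_general {V : Type*} [NormedAddCommGroup V] [InnerProductSpace ℝ V]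
    [FiniteDimensional ℝ V] [Nontrivial V] [MeasurableSpace V] [BorelSpace V] (μ : Measure V)
    [μ.IsAddHaarMeasure] {φ : ℝ → ℝ} (hφ : IsCutoffProfile φ) {Λ : ℝ} (hΛ : 0 ≤ Λ) :
    ∃ C > 0, ∀ (F : Type*) [NormedAddCommGroup F] [InnerProductSpace ℝ F] (u : V → F) (r : ℝ),
      0 < r → ∀ x y : V, dist x y ≤ r →
      ∀ s₁ ∈ Set.Ioc 0 (10 * r), ∀ s₂ ∈ Set.Icc (r / 10) (10 * r),
      HarmonicOnNhd u (ball y (20 * r)) →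
      (∀ t ∈ Set.Icc s₂ (20 * r),
        0 < smoothedHeight μ φ u y t ∧ smoothedFrequency μ φ u y t ≤ Λ) →
      smoothedHeight μ φ u x s₁ ≤ C * smoothedHeight μ φ u y s₂ := by
  obtain ⟨B, hB0, hB⟩ := hφ.exists_shellKernel_le (V := V)
  have hn : (0 : ℝ) < Module.finrank ℝ V := mod_cast Module.finrank_pos
  refine ⟨B * 16 / (Module.finrank ℝ V * 10) *
    (160 ^ (Module.finrank ℝ V - 1) * 160 ^ (2 * Λ)), by positivity, ?_⟩
  intro F _ _ u r hr x y hxy s₁ hs₁ s₂ hs₂ hu hN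
  have hs₂0 : 0 < s₂ := by linarith [hs₂.1]
  have hux : HarmonicOnNhd u (ball x (19 * r)) := hu.mono (ball_subset_ball' (by linarith))
  have hmono : smoothedHeight μ φ u x s₁ ≤ smoothedHeight μ φ u x (10 * r) :=
    smoothedHeight_mono hφ hux hs₁.1 hs₁.2 (by linarith)
  have hcenter : smoothedHeight μ φ u x (10 * r) ≤
      B * (16 * r) / (Module.finrank ℝ V * (10 * r)) * smoothedHeight μ φ u y (16 * r) :=
    smoothedHeight_le_smoothedHeight_of_dist_add_le hφ hB hu (by positivity) (by linarith)
      (by linarith)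
  have hdoubling := smoothedHeight_le_of_smoothedFrequency_le hφ hu hs₂0 (t := 16 * r)
    (by linarith [hs₂.2]) (by linarith) fun t ht => hN t ⟨ht.1, by linarith [ht.2]⟩
  have hratio : 16 * r / s₂ ≤ 160 := by
    rw [div_le_iff₀ hs₂0]
    linarith [hs₂.1]
  have hH : 0 < smoothedHeight μ φ u y s₂ := (hN s₂ ⟨le_rfl, by linarith [hs₂.2]⟩).1
  calc smoothedHeight μ φ u x s₁
      ≤ B * (16 * r) / (Module.finrank ℝ V * (10 * r)) * smoothedHeight μ φ u y (16 * r) :=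
        hmono.trans hcenter
    _ = B * 16 / (Module.finrank ℝ V * 10) * smoothedHeight μ φ u y (16 * r) := by field_simp
    _ ≤ B * 16 / (Module.finrank ℝ V * 10) * ((16 * r / s₂) ^ (Module.finrank ℝ V - 1) *
          (16 * r / s₂) ^ (2 * Λ) * smoothedHeight μ φ u y s₂) := by gcongr
    _ ≤ B * 16 / (Module.finrank ℝ V * 10) * (160 ^ (Module.finrank ℝ V - 1) *
          160 ^ (2 * Λ) * smoothedHeight μ φ u y s₂) := by gcongr
    _ = _ := by ring

variable {F : Type*} [NormedAddCommGroup F] [InnerProductSpace ℝ F]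

theorem IsHarmonicOn.harmonicOnNhd {u : E4 → F} {Ω : Set E4} (hu : IsHarmonicOn u Ω)
    (hΩ : IsOpen Ω) : HarmonicOnNhd u Ω := fun p hp => by
  refine ⟨(hu.1.contDiffAt (hΩ.mem_nhds hp)).of_le ENat.LEInfty.out, ?_⟩
  filter_upwards [hΩ.mem_nhds hp] with q hq
  rw [laplacian_eq_iteratedFDeriv_orthonormalBasis u (EuclideanSpace.basisFun (Fin 4) ℝ)]
  simpa only [EuclideanSpace.basisFun_apply, Pi.zero_apply] using hu.2 q hq

theorem gradNormSq_eq_gradSq (u : E4 → F) : gradNormSq u = gradSq u := by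
  ext p
  rw [gradNormSq_eq_sum (EuclideanSpace.basisFun (Fin 4) ℝ)]
  simp only [gradSq, EuclideanSpace.basisFun_apply]

theorem smoothedFrequency_volume_eq_Nphi (φ : ℝ → ℝ) (u : E4 → F) :
    smoothedFrequency volume φ u = Nphi φ u := by
  ext x r
  simp only [smoothedFrequency, smoothedEnergy, gradNormSq_eq_gradSq]
  rfl

end Main

/-- Flat-case analogue of Lemma 4.2: comparability of the smoothed height at
nearby centers and comparable scales, with constant depending only on `φ` and `Λ`. -/
theorem stmt_15 (φ : ℝ → ℝ) (hφs : ContDiff ℝ (⊤ : ℕ∞) φ) (hφa : Antitone φ)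
    (hφ1 : ∀ t ≤ (3/4 : ℝ), φ t = 1) (hφ0 : ∀ t, (1:ℝ) ≤ t → φ t = 0)
    (Λ : ℝ) (hΛ : 0 < Λ) :
    ∃ C > (0:ℝ),
      ∀ (F : Type) [NormedAddCommGroup F] [InnerProductSpace ℝ F] [FiniteDimensional ℝ F],
      ∀ (u : E4 → F) (Ω : Set E4), IsOpen Ω → IsHarmonicOn u Ω →
      ∀ (r : ℝ), 0 < r → ∀ x y : E4, dist x y ≤ r →
      ∀ s₁ ∈ Set.Ioc (0:ℝ) (10 * r), ∀ s₂ ∈ Set.Icc (r / 10) (10 * r),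
      closedBall y (20 * r) ⊆ Ω →
      (∀ t ∈ Set.Ioc (0:ℝ) (20 * r),
        (0 < Hphi φ u x t ∧ Nphi φ u x t ≤ Λ) ∧
        (0 < Hphi φ u y t ∧ Nphi φ u y t ≤ Λ)) →
      Hphi φ u x s₁ ≤ C * Hphi φ u y s₂ := by
  obtain ⟨C, hC, hbound⟩ := stmt_15_general (volume : Measure E4)
    ⟨hφs.of_le ENat.LEInfty.out, hφa, hφ1, hφ0⟩ hΛ.le
  refine ⟨C, hC, fun F _ _ _ u Ω hΩ hu r hr x y hxy s₁ hs₁ s₂ hs₂ hball hH =>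
    hbound F u r hr x y hxy s₁ hs₁ s₂ hs₂
      ((hu.harmonicOnNhd hΩ).mono (ball_subset_closedBall.trans hball)) fun t ht => ?_⟩
  rw [smoothedFrequency_volume_eq_Nphi]
  exact (hH t ⟨by linarith [hs₂.1, ht.1], ht.2⟩).2
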